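/- arXiv:2510.02419 — 4 statements merged into one kernel-verified Lean document; each statement's English description precedes it below -/
import Mathlib

section
/- Let Ω ⊆ ℝⁿ be open and bounded and let f : ℝⁿ → ℝⁿ be continuously differentiable. Suppose the zero set f⁻¹(0) ∩ closure(Ω) is a finite set contained in Ω, and det Df(x) ≠ 0 at every point x of this zero set. Then lim_{ε→0⁺} ∫_Ω |det Df(x)| · (2πε²)^{−n/2} · exp(−‖f(x)‖²/(2ε²)) dx = card(f⁻¹(0) ∩ Ω). (This is Rice's formula for the number density of points defined by n conditions f(x) = 0: N = ⟨|det ∇f| δ^{(n)}(f)⟩ with the Dirac delta realized as a Gaussian limit.) -/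
open MeasureTheory Real Filter
open scoped Topology

/-- Standard Gaussian density. -/
noncomputable def gphi (n : ℕ) (y : EuclideanSpace ℝ (Fin n)) : ℝ :=
  (2 * π) ^ (-(n : ℝ) / 2) * Real.exp (-(1 / 2) * ‖y‖ ^ 2)

lemma gphi_nonneg (n : ℕ) (y : EuclideanSpace ℝ (Fin n)) : 0 ≤ gphi n y := by
  unfold gphi; positivity

lemma gphi_integral (n : ℕ) : ∫ y, gphi n y = 1 := by
  unfold gphi
  rw [integral_const_mul, GaussianFourier.integral_rexp_neg_mul_sq_norm (by norm_num)]
  rw [show π / (1 / 2) = 2 * π by ring, ← Real.rpow_add (by positivity)]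
  simp [neg_div]

lemma pow_mul_exp_sq (n : ℕ) :
    Tendsto (fun t : ℝ => t ^ n * Real.exp (-(1 / 2) * t ^ 2)) atTop (𝓝 0) := by
  refine squeeze_zero' ?_ ?_ (tendsto_pow_mul_exp_neg_atTop_nhds_zero n)
  · filter_upwards [eventually_ge_atTop 0] with t ht
    positivity
  · filter_upwards [eventually_ge_atTop 2] with t ht
    gcongr
    nlinarith

lemma gphi_peak (n : ℕ) (V : Set (EuclideanSpace ℝ (Fin n))) (hV : MeasurableSet V)
    (hfinV : volume V ≠ ⊤) (h0 : V ∈ 𝓝 0) :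
    Tendsto (fun c : ℝ => ∫ y in V, c ^ n * gphi n (c • y)) atTop (𝓝 1) := by
  have key := tendsto_integral_comp_smul_smul_of_integrable (μ := volume) (gphi_nonneg n)
    (gphi_integral n) (g := V.indicator (fun _ => (1 : ℝ))) ?_ ?_ ?_
  · rw [Set.indicator_of_mem (mem_of_mem_nhds h0)] at key
    refine key.congr fun c => ?_
    rw [← integral_indicator hV]
    congr 1
    ext y
    by_cases hy : y ∈ V <;> simp [hy]
  · have h1 := ((pow_mul_exp_sq n).comp
      (tendsto_norm_cobounded_atTop (E := EuclideanSpace ℝ (Fin n)))).const_mul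
      ((2 * π) ^ (-(n : ℝ) / 2))
    rw [mul_zero] at h1
    refine h1.congr fun y => ?_
    simp only [gphi, Function.comp, finrank_euclideanSpace, Fintype.card_fin]
    ring
  · exact (integrable_indicator_iff hV).2 (integrableOn_const hfinV)
  · have : V.indicator (fun _ => (1 : ℝ)) =ᶠ[𝓝 0] fun _ => 1 := by
      filter_upwards [h0] with y hy
      simp [hy]
    exact continuousAt_const.congr this.symm

lemma gphi_scale (n : ℕ) (ε : ℝ) (hε : 0 < ε) (y : EuclideanSpace ℝ (Fin n)) :
    (ε⁻¹) ^ n * gphi n (ε⁻¹ • y) =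
      (2 * π * ε ^ 2) ^ (-(n : ℝ) / 2) * Real.exp (-‖y‖ ^ 2 / (2 * ε ^ 2)) := by
  unfold gphi
  rw [Real.mul_rpow (x := 2 * π) (y := ε ^ 2) (by positivity) (by positivity)]
  have h1 : (ε ^ 2) ^ (-(n : ℝ) / 2) = (ε⁻¹) ^ n := by
    rw [← Real.rpow_natCast ε 2, ← Real.rpow_mul hε.le]
    rw [show ((2 : ℕ) : ℝ) * (-(n : ℝ) / 2) = -(n : ℝ) by push_cast; ring, Real.rpow_neg hε.le,
      Real.rpow_natCast, inv_pow]
  have h2 : -(1 / 2) * ‖ε⁻¹ • y‖ ^ 2 = -‖y‖ ^ 2 / (2 * ε ^ 2) := by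
    rw [norm_smul, norm_inv, Real.norm_of_nonneg hε.le]
    field_simp
  rw [h1, h2]
  ring

lemma gphi_away (n : ℕ) (A : Set (EuclideanSpace ℝ (Fin n))) (hA : MeasurableSet A)
    (hfinA : volume A < ⊤) (J : EuclideanSpace ℝ (Fin n) → ℝ)
    (f : EuclideanSpace ℝ (Fin n) → EuclideanSpace ℝ (Fin n))
    (M δ : ℝ) (hδ : 0 < δ) (hJ : ∀ x ∈ A, |J x| ≤ M) (hf : ∀ x ∈ A, δ ≤ ‖f x‖) :
    Tendsto (fun c : ℝ => ∫ x in A, |J x| * (c ^ n * gphi n (c • f x))) atTop (𝓝 0) := by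
  have h1 := ((pow_mul_exp_sq n).comp
      (tendsto_id.const_mul_atTop hδ)).const_mul
      (M * (δ⁻¹ ^ n * (2 * π) ^ (-(n : ℝ) / 2)) * volume.real A)
  rw [mul_zero] at h1
  refine squeeze_zero_norm' ?_ h1
  filter_upwards [eventually_ge_atTop 0] with c hc
  have h2 : ∀ x ∈ A, ‖|J x| * (c ^ n * gphi n (c • f x))‖ ≤
      M * (c ^ n * ((2 * π) ^ (-(n : ℝ) / 2) * Real.exp (-(1 / 2) * (δ * c) ^ 2))) := by
    intro x hx
    have hM := (abs_nonneg _).trans (hJ x hx)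
    rw [Real.norm_of_nonneg (mul_nonneg (abs_nonneg _)
      (mul_nonneg (by positivity) (gphi_nonneg _ _)))]
    unfold gphi
    have h3 : δ * c ≤ ‖c • f x‖ := by
      rw [norm_smul, Real.norm_of_nonneg hc, mul_comm]
      exact mul_le_mul_of_nonneg_left (hf x hx) hc
    have h4 : (δ * c) ^ 2 ≤ ‖c • f x‖ ^ 2 := by gcongr
    have h5 : Real.exp (-(1 / 2) * ‖c • f x‖ ^ 2) ≤ Real.exp (-(1 / 2) * (δ * c) ^ 2) :=
      Real.exp_le_exp.2 (by linarith)
    gcongr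
    exact hJ x hx
  refine (norm_setIntegral_le_of_norm_le_const hfinA h2).trans (le_of_eq ?_)
  have : δ ^ n * δ⁻¹ ^ n = 1 := by rw [← mul_pow, mul_inv_cancel₀ hδ.ne', one_pow]
  simp only [Function.comp, id, mul_pow δ c n]
  linear_combination (-M * c ^ n * ((2 * π) ^ (-(n : ℝ) / 2) *
    Real.exp (-(1 / 2) * (δ * c) ^ 2)) * volume.real A) * this

lemma local_nhd (n : ℕ) (f : EuclideanSpace ℝ (Fin n) → EuclideanSpace ℝ (Fin n))
    (hf : ContDiff ℝ 1 f) (x : EuclideanSpace ℝ (Fin n)) (hdet : (fderiv ℝ f x).det ≠ 0) :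
    map f (𝓝 x) = 𝓝 (f x) ∧ ∃ S, IsOpen S ∧ x ∈ S ∧ Set.InjOn f S := by
  have h := hf.contDiffAt.hasStrictFDerivAt (x := x) (by norm_num)
  rw [← ContinuousLinearMap.coe_toContinuousLinearEquivOfDetNeZero _ hdet] at h
  refine ⟨h.map_nhds_eq_of_equiv, (h.toOpenPartialHomeomorph f).source,
    (h.toOpenPartialHomeomorph f).open_source, h.mem_toOpenPartialHomeomorph_source, ?_⟩
  simpa using (h.toOpenPartialHomeomorph f).injOn

lemma rice_scaled
    (n : ℕ) (Ω : Set (EuclideanSpace ℝ (Fin n)))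
    (hΩopen : IsOpen Ω) (hΩbdd : Bornology.IsBounded Ω)
    (f : EuclideanSpace ℝ (Fin n) → EuclideanSpace ℝ (Fin n)) (hf : ContDiff ℝ 1 f)
    (hfin : (f ⁻¹' {0} ∩ closure Ω).Finite)
    (hsub : f ⁻¹' {0} ∩ closure Ω ⊆ Ω)
    (hdet : ∀ x ∈ f ⁻¹' {0} ∩ closure Ω, (fderiv ℝ f x).det ≠ 0) :
    Tendsto (fun c : ℝ =>
        ∫ x in Ω, |(fderiv ℝ f x).det| * (c ^ n * gphi n (c • f x)))
      atTop (𝓝 ((f ⁻¹' {0} ∩ Ω).ncard : ℝ)) := by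
  have hZ : f ⁻¹' {0} ∩ closure Ω = f ⁻¹' {0} ∩ Ω :=
    Set.Subset.antisymm (fun x hx => ⟨hx.1, hsub hx⟩) (fun x hx => ⟨hx.1, subset_closure hx.2⟩)
  have hK : IsCompact (closure Ω) := hΩbdd.isCompact_closure
  have hcdet : Continuous fun x => (fderiv ℝ f x).det :=
    ContinuousLinearMap.continuous_det.comp (hf.continuous_fderiv (by norm_num))
  have hcφ : ∀ c : ℝ, Continuous fun x => |(fderiv ℝ f x).det| * (c ^ n * gphi n (c • f x)) := by
    intro c
    have := hf.continuous
    unfold gphi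
    fun_prop
  have hint : ∀ (c : ℝ) (A : Set _), A ⊆ closure Ω → IntegrableOn
      (fun x => |(fderiv ℝ f x).det| * (c ^ n * gphi n (c • f x))) A := fun c A hA =>
    ((hcφ c).continuousOn.integrableOn_compact hK).mono_set hA
  obtain ⟨V, hV, hVd⟩ := hfin.t2_separation
  have hS : ∀ x, ∃ S, IsOpen S ∧ (x ∈ f ⁻¹' {0} ∩ closure Ω → x ∈ S ∧ Set.InjOn f S) := by
    intro x
    by_cases hx : x ∈ f ⁻¹' {0} ∩ closure Ω
    · obtain ⟨-, S, h1, h2, h3⟩ := local_nhd n f hf x (hdet x hx)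
      exact ⟨S, h1, fun _ => ⟨h2, h3⟩⟩
    · exact ⟨∅, isOpen_empty, fun h => absurd h hx⟩
  choose S hSo hS using hS
  set U : EuclideanSpace ℝ (Fin n) → Set (EuclideanSpace ℝ (Fin n)) :=
    fun x => S x ∩ V x ∩ Ω with hU
  have hUo : ∀ x, IsOpen (U x) := fun x => ((hSo x).inter (hV x).2).inter hΩopen
  have hUΩ : ∀ x, U x ⊆ Ω := fun x => Set.inter_subset_right
  have hUx : ∀ x ∈ hfin.toFinset, x ∈ U x := by
    intro x hx
    rw [hfin.mem_toFinset] at hx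
    exact ⟨⟨(hS x hx).1, (hV x).1⟩, hsub hx⟩
  have hW : IsOpen (⋃ x ∈ hfin.toFinset, U x) := isOpen_biUnion fun x _ => hUo x
  have hWΩ : (⋃ x ∈ hfin.toFinset, U x) ⊆ Ω := Set.iUnion₂_subset fun x _ => hUΩ x
  -- local pieces
  have hloc : ∀ x ∈ hfin.toFinset, Tendsto (fun c : ℝ =>
      ∫ y in U x, |(fderiv ℝ f y).det| * (c ^ n * gphi n (c • f y))) atTop (𝓝 1) := by
    intro x hx
    have hx' := hfin.mem_toFinset.1 hx
    have hinj : Set.InjOn f (U x) := (hS x hx').2.mono fun y hy => hy.1.1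
    have hder : ∀ y ∈ U x, HasFDerivWithinAt f (fderiv ℝ f y) (U x) y := fun y _ =>
      ((hf.differentiable (by norm_num)) y).hasFDerivAt.hasFDerivWithinAt
    have hp := gphi_peak n (f '' U x)
      (measurable_image_of_fderivWithin (hUo x).measurableSet hder hinj) ?_ ?_
    · refine hp.congr fun c => ?_
      rw [integral_image_eq_integral_abs_det_fderiv_smul volume (hUo x).measurableSet hder hinj]
      simp only [smul_eq_mul]
    · refine ne_top_of_le_ne_top (hK.image hf.continuous).measure_lt_top.ne
        (measure_mono (Set.image_mono ((hUΩ x).trans subset_closure)))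
    · have h1 := (local_nhd n f hf x (hdet x hx')).1
      have h0 : f x = 0 := hx'.1
      rw [h0] at h1
      rw [← h1]
      exact image_mem_map ((hUo x).mem_nhds (hUx x hx))
  -- remainder
  have hrem : Tendsto (fun c : ℝ => ∫ y in Ω \ ⋃ x ∈ hfin.toFinset, U x,
      |(fderiv ℝ f y).det| * (c ^ n * gphi n (c • f y))) atTop (𝓝 0) := by
    have hC : IsCompact (closure Ω \ ⋃ x ∈ hfin.toFinset, U x) := hK.diff hW
    obtain ⟨M, hM⟩ := hK.exists_bound_of_continuousOn hcdet.continuousOn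
    obtain ⟨δ, hδ, hδf⟩ : ∃ δ > 0, ∀ y ∈ closure Ω \ ⋃ x ∈ hfin.toFinset, U x, δ ≤ ‖f y‖ := by
      refine hC.exists_forall_le' (a := 0) hf.continuous.norm.continuousOn ?_
      intro y hy
      rw [norm_pos_iff]
      intro h0
      have hyZ : y ∈ hfin.toFinset := hfin.mem_toFinset.2 ⟨h0, hy.1⟩
      exact hy.2 (Set.mem_biUnion hyZ (hUx y hyZ))
    refine gphi_away n _ (hΩopen.measurableSet.diff hW.measurableSet) ?_ _ f M δ hδ
      (fun x hx => hM x (subset_closure hx.1)) (fun x hx => hδf x ⟨subset_closure hx.1, hx.2⟩)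
    exact (measure_mono (Set.diff_subset.trans subset_closure)).trans_lt hK.measure_lt_top
  have hsum := (tendsto_finsetSum _ hloc).add hrem
  have hcard : (∑ x ∈ hfin.toFinset, (1 : ℝ)) + 0 = ((f ⁻¹' {0} ∩ Ω).ncard : ℝ) := by
    rw [← hZ, Set.ncard_eq_toFinset_card _ hfin]
    simp
  rw [hcard] at hsum
  refine hsum.congr fun c => ?_
  rw [← integral_biUnion_finset _ (fun x _ => (hUo x).measurableSet) ?_
    (fun x _ => hint c _ ((hUΩ x).trans subset_closure)),
    ← setIntegral_union Set.disjoint_sdiff_right (hΩopen.measurableSet.diff hW.measurableSet)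
      (hint c _ (hWΩ.trans subset_closure)) (hint c _ (Set.diff_subset.trans subset_closure)),
    Set.union_diff_cancel hWΩ]
  intro x hx y hy hxy
  exact (hVd (by simpa using hx) (by simpa using hy) hxy).mono (fun _ h => h.1.2) (fun _ h => h.1.2)

/-- Rice's formula for the number density of points defined by `n` conditions `f(x) = 0`:
`N = ⟨|det ∇f| δ⁽ⁿ⁾(f)⟩`, with the Dirac delta realized as a Gaussian limit. -/
theorem rice_formula_point_count
    (n : ℕ) (Ω : Set (EuclideanSpace ℝ (Fin n)))
    (hΩopen : IsOpen Ω) (hΩbdd : Bornology.IsBounded Ω)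
    (f : EuclideanSpace ℝ (Fin n) → EuclideanSpace ℝ (Fin n)) (hf : ContDiff ℝ 1 f)
    (hfin : (f ⁻¹' {0} ∩ closure Ω).Finite)
    (hsub : f ⁻¹' {0} ∩ closure Ω ⊆ Ω)
    (hdet : ∀ x ∈ f ⁻¹' {0} ∩ closure Ω, (fderiv ℝ f x).det ≠ 0) :
    Tendsto (fun ε : ℝ =>
        ∫ x in Ω, |(fderiv ℝ f x).det| * (2 * π * ε ^ 2) ^ (-(n : ℝ) / 2) *
          Real.exp (-‖f x‖ ^ 2 / (2 * ε ^ 2)))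
      (𝓝[>] 0) (𝓝 ((f ⁻¹' {0} ∩ Ω).ncard : ℝ)) := by

  refine ((rice_scaled n Ω hΩopen hΩbdd f hf hfin hsub hdet).comp
    tendsto_inv_nhdsGT_zero).congr' ?_
  filter_upwards [self_mem_nhdsWithin] with ε hε
  simp only [Function.comp, gphi_scale n ε hε, mul_assoc]
end

section
/- Let Ψ : ℝ³ → ℝ be three times continuously differentiable and let q ∈ ℝ³ be a point at which the Hessian is diagonal: HΨ(q) = diag(λ₁, λ₂, λ₃) with λ₁ ≠ λ₂ and λ₁ ≠ λ₃. Let (μ, v) be an eigenpair field of HΨ near q with v(q) = e₁, and suppose μ and v are differentiable at q. Then for each j ∈ {1,2,3}, the directional derivative of the eigenvector field is ∂ⱼv(q) = (0, ∂₁∂₂∂ⱼΨ(q)/(λ₁ − λ₂), ∂₁∂₃∂ⱼΨ(q)/(λ₁ − λ₃)). (Eigenframe identity: e.g. ∂₁v₁ = (0, T₁₁₂/(T₁₁ − T₂₂), T₁₁₃/(T₁₁ − T₃₃)).) -/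
/-- The partial derivative `∂ᵢ f` of a scalar field on Euclidean ℝ³. -/
noncomputable def pd (i : Fin 3) (f : EuclideanSpace ℝ (Fin 3) → ℝ)
    (x : EuclideanSpace ℝ (Fin 3)) : ℝ :=
  fderiv ℝ f x (EuclideanSpace.single i 1)

theorem pd_contDiff {n m : WithTop ℕ∞} (i : Fin 3) (f : EuclideanSpace ℝ (Fin 3) → ℝ)
    (hf : ContDiff ℝ n f) (h : m + 1 ≤ n) : ContDiff ℝ m (pd i f) := by
  unfold pd
  exact (hf.fderiv_right h).clm_apply contDiff_const

theorem pd_pd_eq (i j : Fin 3) (f : EuclideanSpace ℝ (Fin 3) → ℝ)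
    (hf : ContDiff ℝ 2 f) (x : EuclideanSpace ℝ (Fin 3)) :
    pd i (pd j f) x = fderiv ℝ (fderiv ℝ f) x (EuclideanSpace.single i 1)
      (EuclideanSpace.single j 1) := by
  have h1 : ContDiff ℝ 1 (fderiv ℝ f) := hf.fderiv_right (by norm_num)
  have h2 : HasFDerivAt (fderiv ℝ f) (fderiv ℝ (fderiv ℝ f) x) x :=
    (h1.differentiable (by norm_num) x).hasFDerivAt
  have h3 := h2.clm_apply (hasFDerivAt_const (EuclideanSpace.single j (1 : ℝ)) x)
  change fderiv ℝ (fun y => fderiv ℝ f y (EuclideanSpace.single j 1)) x _ = _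
  rw [h3.fderiv]
  simp

theorem pd_comm (i j : Fin 3) (f : EuclideanSpace ℝ (Fin 3) → ℝ)
    (hf : ContDiff ℝ 2 f) : pd i (pd j f) = pd j (pd i f) := by
  funext x
  rw [pd_pd_eq i j f hf, pd_pd_eq j i f hf]
  have h := (hf.contDiffAt (x := x)).isSymmSndFDerivAt (by simp)
  exact h _ _

/-- Eigenframe identity for the derivative of the eigenvector field: at a point with
diagonal Hessian `diag(λ₁, λ₂, λ₃)`, `λ₁ ≠ λ₂`, `λ₁ ≠ λ₃`, an eigenpair field `(μ, v)`
with `v(q) = e₁` satisfies `∂ⱼv(q) = (0, T₁₂ⱼ/(λ₁ − λ₂), T₁₃ⱼ/(λ₁ − λ₃))`. -/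
theorem eigenframe_deriv_eigenvector
    (Ψ : EuclideanSpace ℝ (Fin 3) → ℝ) (hΨ : ContDiff ℝ 3 Ψ)
    (q : EuclideanSpace ℝ (Fin 3)) (l1 l2 l3 : ℝ)
    (hdiag : (Matrix.of fun i j => pd i (pd j Ψ) q) = Matrix.diagonal ![l1, l2, l3])
    (h12 : l1 ≠ l2) (h13 : l1 ≠ l3)
    (μ : EuclideanSpace ℝ (Fin 3) → ℝ)
    (v : EuclideanSpace ℝ (Fin 3) → EuclideanSpace ℝ (Fin 3))
    (U : Set (EuclideanSpace ℝ (Fin 3))) (hU : U ∈ nhds q)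
    (heig : ∀ x ∈ U, ∀ i : Fin 3, (∑ j : Fin 3, pd i (pd j Ψ) x * v x j) = μ x * v x i)
    (hnorm : ∀ x ∈ U, ‖v x‖ = 1)
    (hvq : v q = EuclideanSpace.single 0 1)
    (hμdiff : DifferentiableAt ℝ μ q) (hvdiff : DifferentiableAt ℝ v q) :
    ∀ j : Fin 3,
      fderiv ℝ v q (EuclideanSpace.single j 1) 0 = 0 ∧
      fderiv ℝ v q (EuclideanSpace.single j 1) 1 = pd 0 (pd 1 (pd j Ψ)) q / (l1 - l2) ∧
      fderiv ℝ v q (EuclideanSpace.single j 1) 2 = pd 0 (pd 2 (pd j Ψ)) q / (l1 - l3) := by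
  intro j
  have h2 : ContDiff ℝ 2 Ψ := hΨ.of_le (by norm_num)
  have hc2 : ∀ i, ContDiff ℝ 2 (pd i Ψ) := fun i => pd_contDiff i Ψ hΨ (by norm_num)
  have hc1 : ∀ i k, ContDiff ℝ 1 (pd i (pd k Ψ)) := fun i k =>
    pd_contDiff i _ (hc2 k) (by norm_num)
  have hsym : ∀ i, pd j (pd i (pd 0 Ψ)) q = pd 0 (pd i (pd j Ψ)) q := by
    intro i
    rw [pd_comm j i _ (hc2 0), pd_comm j 0 Ψ h2, pd_comm i 0 _ (hc2 j)]
  have hH : ∀ i k, pd i (pd k Ψ) q = Matrix.diagonal ![l1, l2, l3] i k := fun i k =>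
    congrFun (congrFun hdiag i) k
  have hqU : q ∈ U := mem_of_mem_nhds hU
  have hμq : μ q = l1 := by
    have h := heig q hqU 0
    simp [hvq, hH, Fin.sum_univ_three] at h
    exact h.symm
  set D := fderiv ℝ v q with hD
  have hv : ∀ i : Fin 3, HasFDerivAt (fun x => v x i)
      ((EuclideanSpace.proj i : EuclideanSpace ℝ (Fin 3) →L[ℝ] ℝ).comp D) q := fun i =>
    (EuclideanSpace.proj i : EuclideanSpace ℝ (Fin 3) →L[ℝ] ℝ).hasFDerivAt.comp q
      hvdiff.hasFDerivAt
  have hP : ∀ i k, HasFDerivAt (pd i (pd k Ψ)) (fderiv ℝ (pd i (pd k Ψ)) q) q := fun i k =>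
    ((hc1 i k).differentiable (by norm_num) q).hasFDerivAt
  have key : ∀ i : Fin 3,
      (∑ k, (pd i (pd k Ψ) q * D (EuclideanSpace.single j 1) k
        + v q k * pd j (pd i (pd k Ψ)) q))
      = μ q * D (EuclideanSpace.single j 1) i
        + v q i * fderiv ℝ μ q (EuclideanSpace.single j 1) := by
    intro i
    have hL := HasFDerivAt.fun_sum (u := Finset.univ) (fun k _ => (hP i k).mul (hv k))
    have hR := hμdiff.hasFDerivAt.mul (hv i)
    have heq : (fun x => ∑ k : Fin 3, pd i (pd k Ψ) x * v x k) =ᶠ[nhds q]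
        (fun x => μ x * v x i) := by
      filter_upwards [hU] with x hx using heig x hx i
    have hu := hL.unique (hR.congr_of_eventuallyEq heq)
    have := congrArg (fun L : EuclideanSpace ℝ (Fin 3) →L[ℝ] ℝ =>
      L (EuclideanSpace.single j 1)) hu
    simpa [pd, Fin.sum_univ_three] using this
  refine ⟨?_, ?_, ?_⟩
  · have hL := HasFDerivAt.fun_sum (u := Finset.univ) (fun k _ => (hv k).mul (hv k))
    have heq : (fun x => ∑ k : Fin 3, v x k * v x k) =ᶠ[nhds q] (fun _ => (1 : ℝ)) := by
      filter_upwards [hU] with x hx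
      have h := EuclideanSpace.real_norm_sq_eq (v x)
      rw [hnorm x hx] at h
      simp only [← pow_two, ← h, one_pow]
    have hu := hL.unique ((hasFDerivAt_const (1 : ℝ) q).congr_of_eventuallyEq heq)
    have := congrArg (fun L : EuclideanSpace ℝ (Fin 3) →L[ℝ] ℝ =>
      L (EuclideanSpace.single j 1)) hu
    simp [Fin.sum_univ_three, hvq] at this
    linarith
  · have h := key 1
    rw [eq_div_iff (sub_ne_zero.2 h12), ← hsym 1]
    simp [Fin.sum_univ_three, hvq, hH, hμq] at h
    linarith
  · have h := key 2
    rw [eq_div_iff (sub_ne_zero.2 h13), ← hsym 2]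
    simp [Fin.sum_univ_three, hvq, hH, hμq] at h
    linarith
end

section
/- Let Ψ : ℝ³ → ℝ be four times continuously differentiable and let q ∈ ℝ³ be a point at which the Hessian is diagonal: HΨ(q) = diag(λ₁, λ₂, λ₃) with λ₁ ≠ λ₂ and λ₁ ≠ λ₃. Let (μ, v) be an eigenpair field of HΨ near q with v(q) = e₁, and suppose μ and v are twice continuously differentiable near q. Then the mixed second derivative of the eigenvalue field is ∂₁∂₂μ(q) = ∂₁∂₁∂₁∂₂Ψ(q) + 2·∂₁∂₁∂₂Ψ(q)·∂₁∂₂∂₂Ψ(q)/(λ₁ − λ₂) + 2·∂₁∂₁∂₃Ψ(q)·∂₁∂₂∂₃Ψ(q)/(λ₁ − λ₃). (Eigenframe identity: ∂ₓ∂ᵧλ₁ = T₁₁₁₂ + 2T₁₁₂T₁₂₂/(T₁₁ − T₂₂) + 2T₁₁₃T₁₂₃/(T₁₁ − T₃₃).) -/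
open Filter Topology in
theorem pd_congr_aux {i : Fin 3} {f g : EuclideanSpace ℝ (Fin 3) → ℝ} {q : EuclideanSpace ℝ (Fin 3)}
    (h : f =ᶠ[𝓝 q] g) : pd i f =ᶠ[𝓝 q] pd i g := by
  filter_upwards [h.fderiv (𝕜 := ℝ)] with x hx
  simp only [pd, hx]

theorem pd_add_aux (i : Fin 3) {f g : EuclideanSpace ℝ (Fin 3) → ℝ} {q : EuclideanSpace ℝ (Fin 3)}
    (hf : DifferentiableAt ℝ f q) (hg : DifferentiableAt ℝ g q) :
    pd i (fun x => f x + g x) q = pd i f q + pd i g q := by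
  simp only [pd]
  rw [fderiv_fun_add hf hg]; rfl

theorem pd_mul_aux (i : Fin 3) {f g : EuclideanSpace ℝ (Fin 3) → ℝ} {q : EuclideanSpace ℝ (Fin 3)}
    (hf : DifferentiableAt ℝ f q) (hg : DifferentiableAt ℝ g q) :
    pd i (fun x => f x * g x) q = pd i f q * g q + f q * pd i g q := by
  simp only [pd]
  rw [fderiv_fun_mul hf hg]
  simp
  ring

theorem pd_contDiffAt_aux (i : Fin 3) {m n : WithTop ℕ∞} {f : EuclideanSpace ℝ (Fin 3) → ℝ}
    {q : EuclideanSpace ℝ (Fin 3)}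
    (hf : ContDiffAt ℝ n f q) (hmn : m + 1 ≤ n) : ContDiffAt ℝ m (pd i f) q :=
  (hf.fderiv_right hmn).clm_apply contDiffAt_const

theorem pd_contDiff_aux (i : Fin 3) {m n : WithTop ℕ∞} {f : EuclideanSpace ℝ (Fin 3) → ℝ}
    (hf : ContDiff ℝ n f) (hmn : m + 1 ≤ n) : ContDiff ℝ m (pd i f) :=
  contDiff_iff_contDiffAt.2 fun _ => pd_contDiffAt_aux i hf.contDiffAt hmn

theorem pd_comm_aux (i j : Fin 3) {f : EuclideanSpace ℝ (Fin 3) → ℝ} (hf : ContDiff ℝ 2 f) :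
    pd i (pd j f) = pd j (pd i f) := by
  funext x
  have hs : IsSymmSndFDerivAt ℝ f x := hf.contDiffAt.isSymmSndFDerivAt (by simp)
  have hd : DifferentiableAt ℝ (fderiv ℝ f) x :=
    (hf.contDiffAt.fderiv_right (m := 1) (by norm_num)).differentiableAt (by norm_num)
  have key : ∀ a b : Fin 3, pd a (pd b f) x =
      fderiv ℝ (fderiv ℝ f) x (EuclideanSpace.single a 1) (EuclideanSpace.single b 1) := by
    intro a b
    have : pd b f = fun y => fderiv ℝ f y (EuclideanSpace.single b 1) := rfl
    rw [this]
    simp only [pd]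
    rw [fderiv_clm_apply hd (differentiableAt_const _)]
    simp
  rw [key, key, hs.eq]

open Filter Topology in
theorem pd_pd_add_aux (i j : Fin 3) {f g : EuclideanSpace ℝ (Fin 3) → ℝ}
    {q : EuclideanSpace ℝ (Fin 3)}
    (hf : ContDiffAt ℝ 2 f q) (hg : ContDiffAt ℝ 2 g q) :
    pd i (pd j (fun x => f x + g x)) q = pd i (pd j f) q + pd i (pd j g) q := by
  have e : pd j (fun x => f x + g x) =ᶠ[𝓝 q] fun x => pd j f x + pd j g x := by
    filter_upwards [hf.eventually (by simp), hg.eventually (by simp)] with x h1 h2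
    exact pd_add_aux j (h1.differentiableAt (by norm_num)) (h2.differentiableAt (by norm_num))
  rw [(pd_congr_aux e).eq_of_nhds]
  exact pd_add_aux i ((pd_contDiffAt_aux (m := 1) j hf (by norm_num)).differentiableAt (by norm_num))
    ((pd_contDiffAt_aux (m := 1) j hg (by norm_num)).differentiableAt (by norm_num))

open Filter Topology in
theorem pd_pd_mul_aux (i j : Fin 3) {f g : EuclideanSpace ℝ (Fin 3) → ℝ}
    {q : EuclideanSpace ℝ (Fin 3)}
    (hf : ContDiffAt ℝ 2 f q) (hg : ContDiffAt ℝ 2 g q) :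
    pd i (pd j (fun x => f x * g x)) q = pd i (pd j f) q * g q + pd j f q * pd i g q
      + (pd i f q * pd j g q + f q * pd i (pd j g) q) := by
  have e : pd j (fun x => f x * g x) =ᶠ[𝓝 q] fun x => pd j f x * g x + f x * pd j g x := by
    filter_upwards [hf.eventually (by simp), hg.eventually (by simp)] with x h1 h2
    exact pd_mul_aux j (h1.differentiableAt (by norm_num)) (h2.differentiableAt (by norm_num))
  have df := hf.differentiableAt (by norm_num)
  have dg := hg.differentiableAt (by norm_num)
  have df' := (pd_contDiffAt_aux (m := 1) j hf (by norm_num)).differentiableAt (by norm_num)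
  have dg' := (pd_contDiffAt_aux (m := 1) j hg (by norm_num)).differentiableAt (by norm_num)
  rw [(pd_congr_aux e).eq_of_nhds, pd_add_aux i (df'.fun_mul dg) (df.fun_mul dg'), pd_mul_aux i df' dg,
    pd_mul_aux i df dg']

/-- Eigenframe identity for the mixed second derivative of the first eigenvalue field:
`∂ₓ∂ᵧλ₁ = T₁₁₁₂ + 2T₁₁₂T₁₂₂/(T₁₁ − T₂₂) + 2T₁₁₃T₁₂₃/(T₁₁ − T₃₃)`. -/
theorem eigenframe_mixed_second_deriv_eigenvalue
    (Ψ : EuclideanSpace ℝ (Fin 3) → ℝ) (hΨ : ContDiff ℝ 4 Ψ)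
    (q : EuclideanSpace ℝ (Fin 3)) (l1 l2 l3 : ℝ)
    (hdiag : (Matrix.of fun i j => pd i (pd j Ψ) q) = Matrix.diagonal ![l1, l2, l3])
    (h12 : l1 ≠ l2) (h13 : l1 ≠ l3)
    (μ : EuclideanSpace ℝ (Fin 3) → ℝ)
    (v : EuclideanSpace ℝ (Fin 3) → EuclideanSpace ℝ (Fin 3))
    (U : Set (EuclideanSpace ℝ (Fin 3))) (hU : U ∈ nhds q)
    (heig : ∀ x ∈ U, ∀ i : Fin 3, (∑ j : Fin 3, pd i (pd j Ψ) x * v x j) = μ x * v x i)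
    (hnorm : ∀ x ∈ U, ‖v x‖ = 1)
    (hvq : v q = EuclideanSpace.single 0 1)
    (hμ : ContDiffAt ℝ 2 μ q) (hv : ContDiffAt ℝ 2 v q) :
    pd 0 (pd 1 μ) q =
      pd 0 (pd 0 (pd 0 (pd 1 Ψ))) q
        + 2 * pd 0 (pd 0 (pd 1 Ψ)) q * pd 0 (pd 1 (pd 1 Ψ)) q / (l1 - l2)
        + 2 * pd 0 (pd 0 (pd 2 Ψ)) q * pd 0 (pd 1 (pd 2 Ψ)) q / (l1 - l3) := by
  have hA : ∀ i j, ContDiff ℝ 2 (pd i (pd j Ψ)) := fun i j =>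
    pd_contDiff_aux (n := 3) i (pd_contDiff_aux (n := 4) j hΨ (by norm_num)) (by norm_num)
  have hAt : ∀ i j, ContDiffAt ℝ 2 (pd i (pd j Ψ)) q := fun i j => (hA i j).contDiffAt
  have hw : ∀ j : Fin 3, ContDiffAt ℝ 2 (fun x => v x j) q := by
    intro j
    exact (contDiffAt_piLp 2).1 hv j
  have d2 : ∀ {f : EuclideanSpace ℝ (Fin 3) → ℝ}, ContDiffAt ℝ 2 f q → DifferentiableAt ℝ f q :=
    fun h => h.differentiableAt (by norm_num)
  have heq : ∀ i : Fin 3, (fun x => (pd i (pd 0 Ψ) x * v x 0 + pd i (pd 1 Ψ) x * v x 1)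
      + pd i (pd 2 Ψ) x * v x 2) =ᶠ[nhds q] fun x => μ x * v x i := by
    intro i
    filter_upwards [hU] with x hx
    rw [← heig x hx i, Fin.sum_univ_three]
  have second := (pd_congr_aux (i := 0) (pd_congr_aux (i := 1) (heq 0))).eq_of_nhds
  have M : ∀ i j, ContDiffAt ℝ 2 (fun x => pd i (pd j Ψ) x * v x j) q :=
    fun i j => (hAt i j).mul (hw j)
  rw [pd_pd_add_aux _ _ ((M 0 0).add (M 0 1)) (M 0 2), pd_pd_add_aux _ _ (M 0 0) (M 0 1),
    pd_pd_mul_aux _ _ (hAt _ _) (hw _), pd_pd_mul_aux _ _ (hAt _ _) (hw _),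
    pd_pd_mul_aux _ _ (hAt _ _) (hw _), pd_pd_mul_aux _ _ hμ (hw _)] at second
  have first' : ∀ k i : Fin 3,
      pd k (pd i (pd 0 Ψ)) q * v q 0 + pd i (pd 0 Ψ) q * pd k (fun x => v x 0) q
      + (pd k (pd i (pd 1 Ψ)) q * v q 1 + pd i (pd 1 Ψ) q * pd k (fun x => v x 1) q)
      + (pd k (pd i (pd 2 Ψ)) q * v q 2 + pd i (pd 2 Ψ) q * pd k (fun x => v x 2) q)
      = pd k μ q * v q i + μ q * pd k (fun x => v x i) q := fun k i => by
    have h := (pd_congr_aux (i := k) (heq i)).eq_of_nhds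
    rw [pd_add_aux _ (d2 ((M i 0).add (M i 1))) (d2 (M i 2)), pd_add_aux _ (d2 (M i 0)) (d2 (M i 1)),
      pd_mul_aux _ (d2 (hAt _ _)) (d2 (hw _)), pd_mul_aux _ (d2 (hAt _ _)) (d2 (hw _)),
      pd_mul_aux _ (d2 (hAt _ _)) (d2 (hw _)), pd_mul_aux _ (d2 hμ) (d2 (hw _))] at h
    exact h
  have hd : ∀ i j, pd i (pd j Ψ) q = Matrix.diagonal ![l1, l2, l3] i j := fun i j =>
    congrFun (congrFun hdiag i) j
  have a00 := hd 0 0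
  have a01 := hd 0 1
  have a02 := hd 0 2
  have a10 := hd 1 0
  have a11 := hd 1 1
  have a12 := hd 1 2
  have a20 := hd 2 0
  have a21 := hd 2 1
  have a22 := hd 2 2
  simp [Matrix.diagonal] at a00 a01 a02 a10 a11 a12 a20 a21 a22
  have w0 : v q 0 = 1 := by simp [hvq]
  have w1 : v q 1 = 0 := by simp [hvq]
  have w2 : v q 2 = 0 := by simp [hvq]
  have m0 : μ q = l1 := by
    have := (heq 0).eq_of_nhds
    simp only [w0, w1, w2, a00] at this
    linarith
  -- symmetries
  have h2 : ContDiff ℝ 2 Ψ := hΨ.of_le (by norm_num)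
  have h3 : ∀ i, ContDiff ℝ 2 (pd i Ψ) := fun i => pd_contDiff_aux i hΨ (by norm_num)
  have s10 : pd 1 (pd 0 Ψ) = pd 0 (pd 1 Ψ) := pd_comm_aux 1 0 h2
  have s20 : pd 2 (pd 0 Ψ) = pd 0 (pd 2 Ψ) := pd_comm_aux 2 0 h2
  have s1 : ∀ j, pd 1 (pd 0 (pd j Ψ)) = pd 0 (pd 1 (pd j Ψ)) := fun j => pd_comm_aux 1 0 (h3 j)
  have f00 := first' 0 0
  have f10 := first' 1 0
  have f01 := first' 0 1
  have f11 := first' 1 1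
  have f02 := first' 0 2
  have f12 := first' 1 2
  simp only [w0, w1, w2, a00, a01, a02, a10, a11, a12, a20, a21, a22, m0, s10, s20, s1]
    at f00 f10 f01 f11 f02 f12 second
  have e2 : l1 - l2 ≠ 0 := sub_ne_zero.2 h12
  have e3 : l1 - l3 ≠ 0 := sub_ne_zero.2 h13
  have g01 : pd 0 (fun x => v x 1) q = pd 0 (pd 0 (pd 1 Ψ)) q / (l1 - l2) := by
    rw [eq_div_iff e2]; linarith
  have g11 : pd 1 (fun x => v x 1) q = pd 0 (pd 1 (pd 1 Ψ)) q / (l1 - l2) := by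
    rw [eq_div_iff e2]; linarith
  have g02 : pd 0 (fun x => v x 2) q = pd 0 (pd 0 (pd 2 Ψ)) q / (l1 - l3) := by
    rw [eq_div_iff e3]; linarith
  have g12 : pd 1 (fun x => v x 2) q = pd 0 (pd 1 (pd 2 Ψ)) q / (l1 - l3) := by
    rw [eq_div_iff e3]; linarith
  have p0 : pd 0 μ q = pd 0 (pd 0 (pd 0 Ψ)) q := by linarith
  have p1 : pd 1 μ q = pd 0 (pd 0 (pd 1 Ψ)) q := by linarith
  rw [g01, g11, g02, g12, p0, p1] at second
  linear_combination -second
end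

section
/- Let R(α, β, γ) be the ZYZ Euler rotation matrix with α, γ ∈ (−π, π] and β ∈ (0, π). Then the Euler angles are recovered from the matrix entries by the two-argument arctangent: atan2(R₂₃, R₁₃) = α, atan2(√(R₁₃² + R₂₃²), R₃₃) = β, and atan2(R₃₂, −R₃₁) = γ, where Rᵢⱼ denotes the (i,j) entry of R(α, β, γ). -/
open Real Matrix

/-- The two-argument arctangent: `atan2 y x = arg (x + iy) ∈ (−π, π]`. -/
noncomputable def atan2 (y x : ℝ) : ℝ :=
  Complex.arg (x + y * Complex.I)

/-- Polar form: `atan2` recovers the angle. -/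
theorem atan2_polar {r θ y x : ℝ} (hr : 0 < r) (hθ : θ ∈ Set.Ioc (-π) π)
    (hy : y = r * sin θ) (hx : x = r * cos θ) : atan2 y x = θ := by
  have h := Complex.arg_mul_cos_add_sin_mul_I hr hθ
  rw [atan2, hy, hx]
  convert h using 2
  push_cast
  ring

/-- Recovery of the ZYZ-convention Euler angles (with `α, γ ∈ (−π, π]`, `β ∈ (0, π)`)
from the entries of the Euler rotation matrix via the two-argument arctangent. -/
theorem euler_angles_from_rotation_matrix
    (α β γ : ℝ) (hα : α ∈ Set.Ioc (-π) π) (hβ : β ∈ Set.Ioo 0 π) (hγ : γ ∈ Set.Ioc (-π) π)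
    (R : Matrix (Fin 3) (Fin 3) ℝ)
    (hR : R = Matrix.of
      ![![cos α * cos β * cos γ - sin α * sin γ,
          -(cos α * cos β * sin γ) - cos γ * sin α,
          cos α * sin β],
        ![cos β * cos γ * sin α + cos α * sin γ,
          cos α * cos γ - cos β * sin α * sin γ,
          sin α * sin β],
        ![-(cos γ * sin β), sin β * sin γ, cos β]]) :
    atan2 (R 1 2) (R 0 2) = α ∧
    atan2 (Real.sqrt (R 0 2 ^ 2 + R 1 2 ^ 2)) (R 2 2) = β ∧
    atan2 (R 2 1) (-(R 2 0)) = γ := by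
  have hs : 0 < sin β := sin_pos_of_pos_of_lt_pi hβ.1 hβ.2
  have hβ' : β ∈ Set.Ioc (-π) π := ⟨by linarith [hβ.1, Real.pi_pos], hβ.2.le⟩
  have h02 : R 0 2 = cos α * sin β := by rw [hR]; rfl
  have h12 : R 1 2 = sin α * sin β := by rw [hR]; rfl
  have h22 : R 2 2 = cos β := by rw [hR]; rfl
  have h21 : R 2 1 = sin β * sin γ := by rw [hR]; rfl
  have h20 : R 2 0 = -(cos γ * sin β) := by rw [hR]; rfl
  have hsq : Real.sqrt (R 0 2 ^ 2 + R 1 2 ^ 2) = sin β := by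
    rw [h02, h12, ← Real.sqrt_sq hs.le]
    congr 1
    rw [Real.sqrt_sq hs.le]
    linear_combination sin β ^ 2 * sin_sq_add_cos_sq α
  refine ⟨atan2_polar hs hα ?_ ?_, atan2_polar one_pos hβ' ?_ ?_, atan2_polar hs hγ ?_ ?_⟩
  · rw [h12]; ring
  · rw [h02]; ring
  · rw [hsq]; ring
  · rw [h22]; ring
  · rw [h21]
  · rw [h20]; ring
end
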